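/- arXiv:1801.03922 — 3 statements merged into one kernel-verified Lean document; each statement's English description precedes it below -/
import Mathlib

section
/- Let Λ be a finite metric space and let w assign a nonnegative real weight w(Q) to each subset Q ⊆ Λ, satisfying Σ_{Q∋x} w(Q)·|Q|²·exp(μ·diam(Q)) ≤ ζ for every x ∈ Λ, for some constants μ, ζ > 0. Then for arbitrary subsets P, S ⊆ Λ: Σ_{Q : P∼Q and Q∼S} w(Q) ≤ ζ·Σ_{p∈P} exp(−μ·dist(p,S)). -/
/-!
A set `Q` containing `p` and meeting `S` has `dist(p,S) ≤ diam Q`, so inserting the factor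
`exp(μ · diam Q) · exp(-μ · dist(p,S)) ≥ 1` bounds the total weight of all such `Q` by
`ζ · exp(-μ · dist(p,S))`; the factor `|Q|² ≥ 1` in the decay condition only helps. A set meeting
`P` contains some `p ∈ P`, and a union bound over `p` gives the estimate.
-/

noncomputable section

open scoped BigOperators

namespace SetSums

variable {Λ : Type*} [Fintype Λ] [DecidableEq Λ] [MetricSpace Λ]

/-- Distance between two sets of sites: `dist(X,Y) = min_{x∈X, y∈Y} dist x y`. -/
def setDist (X Y : Set Λ) : ℝ := sInf (Set.image2 dist X Y)

lemma sum_biUnion_le_sum_sum {ι κ M : Type*} [DecidableEq ι] [AddCommMonoid M] [PartialOrder M]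
    [IsOrderedAddMonoid M] {P : Finset κ} {t : κ → Finset ι} {f : ι → M}
    (hf : ∀ p ∈ P, ∀ i ∈ t p, 0 ≤ f i) :
    ∑ i ∈ P.biUnion t, f i ≤ ∑ p ∈ P, ∑ i ∈ t p, f i := by
  classical
  calc ∑ i ∈ P.biUnion t, f i
      ≤ ∑ i ∈ P.biUnion t, ∑ p ∈ P with i ∈ t p, f i := by
        refine Finset.sum_le_sum fun i hi => ?_
        obtain ⟨p, hp, hip⟩ := Finset.mem_biUnion.1 hi
        exact Finset.single_le_sum (f := fun _ => f i) (fun _ _ => hf p hp i hip)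
          (Finset.mem_filter.2 ⟨hp, hip⟩)
    _ = ∑ p ∈ P, ∑ i ∈ t p, f i :=
        Finset.sum_comm' fun i p => by
          simp only [Finset.mem_biUnion, Finset.mem_filter]
          tauto

lemma le_mul_card_pow {α R : Type*} [Semiring R] [PartialOrder R] [IsOrderedRing R]
    {a : R} (ha : 0 ≤ a) {Q : Finset α} (hQ : Q.Nonempty) (n : ℕ) :
    a ≤ a * (Q.card : R) ^ n :=
  le_mul_of_one_le_right ha (one_le_pow₀ (by simpa using Nat.mono_cast (α := R) hQ.card_pos))

lemma sum_mem_mul_le_sum_mem_mul_card_pow {α R : Type*} [DecidableEq α] [Semiring R]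
    [PartialOrder R] [IsOrderedRing R] {𝒬 : Finset (Finset α)} {w g : Finset α → R}
    (hw : ∀ Q ∈ 𝒬, 0 ≤ w Q) (hg : ∀ Q ∈ 𝒬, 0 ≤ g Q) (x : α) (n : ℕ) :
    ∑ Q ∈ 𝒬 with x ∈ Q, w Q * g Q ≤ ∑ Q ∈ 𝒬 with x ∈ Q, w Q * (Q.card : R) ^ n * g Q := by
  refine Finset.sum_le_sum fun Q hQ => ?_
  obtain ⟨hQ, hx⟩ := Finset.mem_filter.1 hQ
  exact mul_le_mul_of_nonneg_right (le_mul_card_pow (hw Q hQ) ⟨x, hx⟩ n) (hg Q hQ)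

section PseudoMetricSpace

variable {X : Type*} [PseudoMetricSpace X] {μ : ℝ} {S : Set X}

lemma infDist_le_diam {p : X} {Q : Set X} (hQ : Bornology.IsBounded Q) (hp : p ∈ Q)
    (hQS : (Q ∩ S).Nonempty) : Metric.infDist p S ≤ Metric.diam Q := by
  obtain ⟨s, hsQ, hsS⟩ := hQS
  exact (Metric.infDist_le_dist_of_mem hsS).trans (Metric.dist_le_diam_of_mem hQ hp hsQ)

lemma one_le_exp_diam_mul_exp_neg_infDist (hμ : 0 ≤ μ) {p : X} {Q : Set X}
    (hQ : Bornology.IsBounded Q) (hp : p ∈ Q) (hQS : (Q ∩ S).Nonempty) :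
    1 ≤ Real.exp (μ * Metric.diam Q) * Real.exp (-μ * Metric.infDist p S) := by
  rw [← Real.exp_add, Real.one_le_exp_iff, neg_mul, ← sub_eq_add_neg, sub_nonneg]
  exact mul_le_mul_of_nonneg_left (infDist_le_diam hQ hp hQS) hμ

variable {ι : Type*} {s : Finset ι} {Q : ι → Set X} {w : ι → ℝ}

open Classical in
lemma sum_mem_inter_nonempty_le_sum_mem_mul_exp (hw : ∀ i ∈ s, 0 ≤ w i) (hμ : 0 ≤ μ)
    (hQ : ∀ i ∈ s, Bornology.IsBounded (Q i)) (p : X) :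
    ∑ i ∈ s with p ∈ Q i ∧ (Q i ∩ S).Nonempty, w i ≤
      (∑ i ∈ s with p ∈ Q i, w i * Real.exp (μ * Metric.diam (Q i))) *
        Real.exp (-μ * Metric.infDist p S) := by
  rw [Finset.sum_mul, ← Finset.filter_filter]
  refine (Finset.sum_le_sum fun i hi => ?_).trans <|
    Finset.sum_le_sum_of_subset_of_nonneg (Finset.filter_subset _ _) fun i hi _ => ?_
  · simp only [Finset.mem_filter] at hi
    obtain ⟨⟨his, hp⟩, hQS⟩ := hi
    rw [mul_assoc]
    exact le_mul_of_one_le_right (hw i his)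
      (one_le_exp_diam_mul_exp_neg_infDist hμ (hQ i his) hp hQS)
  · have := hw i (Finset.mem_filter.1 hi).1
    positivity

open Classical in
theorem middle_sum_estimate_general {ζ : ℝ} {P : Finset X} (hw : ∀ i ∈ s, 0 ≤ w i) (hμ : 0 ≤ μ)
    (hQ : ∀ i ∈ s, Bornology.IsBounded (Q i))
    (hdecay : ∀ p ∈ P, ∑ i ∈ s with p ∈ Q i, w i * Real.exp (μ * Metric.diam (Q i)) ≤ ζ) :
    ∑ i ∈ s with ((P : Set X) ∩ Q i).Nonempty ∧ (Q i ∩ S).Nonempty, w i ≤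
      ζ * ∑ p ∈ P, Real.exp (-μ * Metric.infDist p S) := by
  have union_eq : ({i ∈ s | ((P : Set X) ∩ Q i).Nonempty ∧ (Q i ∩ S).Nonempty} : Finset ι) =
      P.biUnion fun p => {i ∈ s | p ∈ Q i ∧ (Q i ∩ S).Nonempty} := by
    ext i
    simp only [Finset.mem_filter, Finset.mem_biUnion, Set.Nonempty, Set.mem_inter_iff,
      Finset.mem_coe]
    tauto
  calc ∑ i ∈ s with ((P : Set X) ∩ Q i).Nonempty ∧ (Q i ∩ S).Nonempty, w i
      ≤ ∑ p ∈ P, ∑ i ∈ s with p ∈ Q i ∧ (Q i ∩ S).Nonempty, w i := by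
        rw [union_eq]
        exact sum_biUnion_le_sum_sum fun p _ i hi => hw i (Finset.mem_filter.1 hi).1
    _ ≤ ∑ p ∈ P, ζ * Real.exp (-μ * Metric.infDist p S) :=
        Finset.sum_le_sum fun p hp =>
          (sum_mem_inter_nonempty_le_sum_mem_mul_exp hw hμ hQ p).trans <|
            mul_le_mul_of_nonneg_right (hdecay p hp) (Real.exp_nonneg _)
    _ = ζ * ∑ p ∈ P, Real.exp (-μ * Metric.infDist p S) := (Finset.mul_sum _ _ _).symm

end PseudoMetricSpace

/-- **Middle-sum estimate:** if `Σ_{Q∋x} w(Q)|Q|²e^{μ·diam Q} ≤ ζ` for all `x`, then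
`Σ_{Q : P∼Q∼S} w(Q) ≤ ζ·Σ_{p∈P} e^{−μ·dist(p,S)}`. -/
theorem middle_sum_estimate
    (w : Finset Λ → ℝ) (hw : ∀ Q, 0 ≤ w Q)
    (μ ζ : ℝ) (hμ : 0 < μ) (hζ : 0 < ζ)
    (hdecay : ∀ x : Λ, ∑ Q ∈ Finset.univ.filter (fun Q : Finset Λ => x ∈ Q),
        w Q * (Q.card : ℝ) ^ 2 * Real.exp (μ * Metric.diam (Q : Set Λ)) ≤ ζ)
    (P S : Finset Λ) :
    ∑ Q ∈ Finset.univ.filter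
        (fun Q : Finset Λ => (P ∩ Q).Nonempty ∧ (Q ∩ S).Nonempty), w Q ≤
      ζ * ∑ p ∈ P, Real.exp (-μ * Metric.infDist p (S : Set Λ)) := by
  have decay_exp (p : Λ) :
      ∑ Q : Finset Λ with p ∈ Q, w Q * Real.exp (μ * Metric.diam (Q : Set Λ)) ≤ ζ :=
    le_trans (sum_mem_mul_le_sum_mem_mul_card_pow (fun Q _ => hw Q)
      (fun Q _ => Real.exp_nonneg _) p 2) (hdecay p)
  simpa [← Finset.coe_inter] using middle_sum_estimate_general (s := Finset.univ)
    (Q := fun Q : Finset Λ => (Q : Set Λ)) (S := S) (fun Q _ => hw Q) hμ.le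
    (fun Q _ => Q.finite_toSet.isBounded) fun p _ => by simpa using decay_exp p

end SetSums
end
end

section
/- Let Λ be a finite metric space and let w assign a nonnegative real weight w(Q) to each subset Q ⊆ Λ, satisfying Σ_{Q∋x} w(Q)·|Q|²·exp(μ·diam(Q)) ≤ ζ for every x ∈ Λ, for some constants μ, ζ > 0. Then for arbitrary subsets P, S ⊆ Λ: Σ_{Q,R : P∼Q, Q∼R} |Q∪R|·w(Q)·w(R)·exp(−μ·dist(Q∪R, S)) ≤ 2ζ²·Σ_{p∈P} exp(−μ·dist(p,S)). -/
/-!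
A set meeting `A` contains a site of `A`, so a sum over the sets meeting `A` is at most the sum,
over the sites `a ∈ A`, of the sums over the sets through `a`. With `f Q = w Q |Q| e^{μ diam Q}`
the hypothesis reads `∑_{Q ∋ x} |Q| f Q ≤ ζ`. Summing over `R ∼ Q` costs a factor `|Q| ζ`; the
hypothesis absorbs the cardinality, and the sum over `Q ∋ p` contributes another `ζ`. Finally,
`Q ∪ R` has diameter at most `diam Q + diam R` when `Q ∼ R`, so moving from `p ∈ Q` to the site of
`Q ∪ R` closest to `S` costs a factor `e^{μ diam Q} e^{μ diam R}`, while `|Q ∪ R| ≤ 2 |Q| |R|`.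
-/

noncomputable section

open scoped BigOperators

namespace SetSums

variable {Λ : Type*} [Fintype Λ] [DecidableEq Λ] [MetricSpace Λ]

section Counting

variable {α M : Type*} [DecidableEq α]

lemma card_union_le_two_mul_card_mul_card {Q R : Finset α} (hQ : Q.Nonempty) (hR : R.Nonempty) :
    (Q ∪ R).card ≤ 2 * (Q.card * R.card) :=
  calc (Q ∪ R).card ≤ Q.card + R.card := Finset.card_union_le Q R
    _ ≤ Q.card * R.card + Q.card * R.card :=
      Nat.add_le_add (Nat.le_mul_of_pos_right _ hR.card_pos) (Nat.le_mul_of_pos_left _ hQ.card_pos)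
    _ = 2 * (Q.card * R.card) := (two_mul _).symm

lemma sum_inter_nonempty_le_sum_sum_mem [AddCommMonoid M] [PartialOrder M] [IsOrderedAddMonoid M]
    {F : Finset (Finset α)} {f : Finset α → M} (hf : ∀ Q ∈ F, 0 ≤ f Q) (A : Finset α) :
    ∑ Q ∈ F with (A ∩ Q).Nonempty, f Q ≤ ∑ a ∈ A, ∑ Q ∈ F with a ∈ Q, f Q :=
  calc ∑ Q ∈ F with (A ∩ Q).Nonempty, f Q
      ≤ ∑ Q ∈ F with (A ∩ Q).Nonempty, ∑ _a ∈ A ∩ Q, f Q := by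
        refine Finset.sum_le_sum fun Q hQ => ?_
        obtain ⟨hQF, a, ha⟩ := Finset.mem_filter.1 hQ
        exact Finset.single_le_sum (f := fun _ => f Q) (fun _ _ => hf Q hQF) ha
    _ = ∑ a ∈ A, ∑ Q ∈ F with a ∈ Q, f Q := by
        refine Finset.sum_comm' fun Q a => ?_
        simp only [Finset.mem_filter, Finset.mem_inter]
        exact ⟨fun h => ⟨⟨h.1.1, h.2.2⟩, h.2.1⟩,
          fun h => ⟨⟨h.1.1, a, Finset.mem_inter.2 ⟨h.2, h.1.2⟩⟩, h.2, h.1.2⟩⟩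

variable [CommSemiring M] [PartialOrder M] [IsOrderedRing M] {F : Finset (Finset α)}
  {f : Finset α → M} {ζ : M}

lemma sum_inter_nonempty_le_card_mul (hf : ∀ Q ∈ F, 0 ≤ f Q)
    (hζ : ∀ x, ∑ Q ∈ F with x ∈ Q, f Q ≤ ζ) (A : Finset α) :
    ∑ Q ∈ F with (A ∩ Q).Nonempty, f Q ≤ A.card * ζ :=
  calc ∑ Q ∈ F with (A ∩ Q).Nonempty, f Q ≤ ∑ a ∈ A, ∑ Q ∈ F with a ∈ Q, f Q :=
        sum_inter_nonempty_le_sum_sum_mem hf A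
    _ ≤ A.card • ζ := Finset.sum_le_card_nsmul _ _ _ fun a _ => hζ a
    _ = A.card * ζ := nsmul_eq_mul _ _

lemma sum_mem_le_of_sum_mem_card_mul_le (hf : ∀ Q ∈ F, 0 ≤ f Q) {x : α}
    (hζ : ∑ Q ∈ F with x ∈ Q, Q.card * f Q ≤ ζ) : ∑ Q ∈ F with x ∈ Q, f Q ≤ ζ := by
  refine (Finset.sum_le_sum fun Q hQ => ?_).trans hζ
  obtain ⟨hQF, hxQ⟩ := Finset.mem_filter.1 hQ
  have one_le_card : (1 : M) ≤ Q.card := by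
    simpa only [Nat.cast_one] using Nat.mono_cast (α := M) (Finset.card_pos.2 ⟨x, hxQ⟩)
  exact le_mul_of_one_le_left (hf Q hQF) one_le_card

lemma sum_mem_sum_inter_nonempty_mul_le_sq (hf : ∀ Q ∈ F, 0 ≤ f Q)
    (hζ : ∀ x, ∑ Q ∈ F with x ∈ Q, Q.card * f Q ≤ ζ) (p : α) :
    ∑ Q ∈ F with p ∈ Q, ∑ R ∈ F with (Q ∩ R).Nonempty, f Q * f R ≤ ζ ^ 2 := by
  have hf_sum (x : α) : ∑ Q ∈ F with x ∈ Q, f Q ≤ ζ := sum_mem_le_of_sum_mem_card_mul_le hf (hζ x)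
  have ζ_nonneg : 0 ≤ ζ :=
    (Finset.sum_nonneg fun Q hQ => hf Q (Finset.mem_filter.1 hQ).1).trans (hf_sum p)
  calc ∑ Q ∈ F with p ∈ Q, ∑ R ∈ F with (Q ∩ R).Nonempty, f Q * f R
      ≤ ∑ Q ∈ F with p ∈ Q, f Q * (Q.card * ζ) := by
        refine Finset.sum_le_sum fun Q hQ => ?_
        rw [← Finset.mul_sum]
        exact mul_le_mul_of_nonneg_left (sum_inter_nonempty_le_card_mul hf hf_sum Q)
          (hf Q (Finset.mem_filter.1 hQ).1)
    _ = (∑ Q ∈ F with p ∈ Q, Q.card * f Q) * ζ := by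
        rw [Finset.sum_mul]
        exact Finset.sum_congr rfl fun Q _ => by ring
    _ ≤ ζ * ζ := mul_le_mul_of_nonneg_right (hζ p) ζ_nonneg
    _ = ζ ^ 2 := (sq ζ).symm

lemma sum_inter_nonempty_sum_inter_nonempty_le {g : Finset α → Finset α → M} {c : α → M}
    {P : Finset α} (hf : ∀ Q ∈ F, 0 ≤ f Q) (hζ : ∀ x, ∑ Q ∈ F with x ∈ Q, Q.card * f Q ≤ ζ)
    (hg : ∀ Q ∈ F, ∀ R ∈ F, 0 ≤ g Q R) (hc : ∀ p ∈ P, 0 ≤ c p)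
    (hgc : ∀ p ∈ P, ∀ Q ∈ F, ∀ R ∈ F, p ∈ Q → (Q ∩ R).Nonempty → g Q R ≤ c p * (f Q * f R)) :
    ∑ Q ∈ F with (P ∩ Q).Nonempty, ∑ R ∈ F with (Q ∩ R).Nonempty, g Q R ≤
      (∑ p ∈ P, c p) * ζ ^ 2 :=
  calc ∑ Q ∈ F with (P ∩ Q).Nonempty, ∑ R ∈ F with (Q ∩ R).Nonempty, g Q R
      ≤ ∑ p ∈ P, ∑ Q ∈ F with p ∈ Q, ∑ R ∈ F with (Q ∩ R).Nonempty, g Q R :=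
        sum_inter_nonempty_le_sum_sum_mem
          (fun Q hQ => Finset.sum_nonneg fun R hR => hg Q hQ R (Finset.mem_filter.1 hR).1) P
    _ ≤ ∑ p ∈ P, ∑ Q ∈ F with p ∈ Q, ∑ R ∈ F with (Q ∩ R).Nonempty, c p * (f Q * f R) := by
        refine Finset.sum_le_sum fun p hp => Finset.sum_le_sum fun Q hQ =>
          Finset.sum_le_sum fun R hR => ?_
        rw [Finset.mem_filter] at hQ hR
        exact hgc p hp Q hQ.1 R hR.1 hQ.2 hR.2
    _ = ∑ p ∈ P, c p * ∑ Q ∈ F with p ∈ Q, ∑ R ∈ F with (Q ∩ R).Nonempty, f Q * f R := by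
        simp only [Finset.mul_sum]
    _ ≤ ∑ p ∈ P, c p * ζ ^ 2 := Finset.sum_le_sum fun p hp =>
        mul_le_mul_of_nonneg_left (sum_mem_sum_inter_nonempty_mul_le_sq hf hζ p) (hc p hp)
    _ = (∑ p ∈ P, c p) * ζ ^ 2 := (Finset.sum_mul _ _ _).symm

end Counting

section Decay

variable {α : Type*} [PseudoMetricSpace α]

/-- When `S = ∅`, both distances to `S` take the junk value `0`. -/
lemma infDist_le_diam_add_sInf_dist {T : Set α} (hT : Bornology.IsBounded T) {p : α} (hp : p ∈ T)
    (S : Set α) : Metric.infDist p S ≤ Metric.diam T + sInf (Set.image2 dist T S) := by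
  rcases S.eq_empty_or_nonempty with rfl | hS
  · simpa only [Metric.infDist_empty, Set.image2_empty_right, Real.sInf_empty, add_zero]
      using Metric.diam_nonneg
  rw [← sub_le_iff_le_add']
  refine le_csInf (Set.Nonempty.image2 ⟨p, hp⟩ hS) ?_
  rintro _ ⟨t, ht, s, hs, rfl⟩
  rw [sub_le_iff_le_add']
  calc Metric.infDist p S ≤ dist p s := Metric.infDist_le_dist_of_mem hs
    _ ≤ dist p t + dist t s := dist_triangle p t s
    _ ≤ Metric.diam T + dist t s := by gcongr; exact Metric.dist_le_diam_of_mem hT hp ht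

variable [DecidableEq α] {μ : ℝ}

lemma exp_neg_sInf_dist_union_le (hμ : 0 ≤ μ) {Q R : Finset α} {p : α} (hp : p ∈ Q)
    (hQR : (Q ∩ R).Nonempty) (S : Set α) :
    Real.exp (-μ * sInf (Set.image2 dist ((Q ∪ R : Finset α) : Set α) S)) ≤
      Real.exp (-μ * Metric.infDist p S) *
        (Real.exp (μ * Metric.diam (Q : Set α)) * Real.exp (μ * Metric.diam (R : Set α))) := by
  have diam_union_le : Metric.diam ((Q ∪ R : Finset α) : Set α) ≤
      Metric.diam (Q : Set α) + Metric.diam (R : Set α) := by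
    rw [Finset.coe_union]
    exact Metric.diam_union' (by exact_mod_cast hQR)
  have infDist_le := infDist_le_diam_add_sInf_dist (Q ∪ R).finite_toSet.isBounded
    (Finset.mem_coe.2 (Finset.mem_union_left R hp)) S
  rw [← Real.exp_add, ← Real.exp_add, Real.exp_le_exp]
  have := mul_le_mul_of_nonneg_left (infDist_le.trans (add_le_add_left diam_union_le _)) hμ
  linarith

lemma card_union_mul_exp_neg_sInf_dist_union_le (hμ : 0 ≤ μ) {Q R : Finset α} {p : α} (hp : p ∈ Q)
    (hQR : (Q ∩ R).Nonempty) (S : Set α) :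
    ((Q ∪ R).card : ℝ) *
        Real.exp (-μ * sInf (Set.image2 dist ((Q ∪ R : Finset α) : Set α) S)) ≤
      2 * Real.exp (-μ * Metric.infDist p S) *
        ((Q.card * Real.exp (μ * Metric.diam (Q : Set α))) *
          (R.card * Real.exp (μ * Metric.diam (R : Set α)))) := by
  have card_union_le : ((Q ∪ R).card : ℝ) ≤ 2 * (Q.card * R.card) := by
    exact_mod_cast card_union_le_two_mul_card_mul_card
      (hQR.mono Finset.inter_subset_left) (hQR.mono Finset.inter_subset_right)
  refine (mul_le_mul card_union_le (exp_neg_sInf_dist_union_le hμ hp hQR S)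
    (Real.exp_nonneg _) (by positivity)).trans_eq ?_
  ring

/-- `setDist` is only available on a `MetricSpace`, so the infimum defining it is spelled out. -/
theorem branching_sum_estimate_general {F : Finset (Finset α)} {w : Finset α → ℝ}
    (hw : ∀ Q ∈ F, 0 ≤ w Q) {ζ : ℝ} (hμ : 0 ≤ μ)
    (hdecay : ∀ x : α, ∑ Q ∈ F with x ∈ Q,
        w Q * (Q.card : ℝ) ^ 2 * Real.exp (μ * Metric.diam (Q : Set α)) ≤ ζ)
    (P : Finset α) (S : Set α) :
    ∑ Q ∈ F with (P ∩ Q).Nonempty, ∑ R ∈ F with (Q ∩ R).Nonempty,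
        ((Q ∪ R).card : ℝ) * w Q * w R *
          Real.exp (-μ * sInf (Set.image2 dist ((Q ∪ R : Finset α) : Set α) S)) ≤
      2 * ζ ^ 2 * ∑ p ∈ P, Real.exp (-μ * Metric.infDist p S) := by
  let f : Finset α → ℝ := fun Q => w Q * (Q.card * Real.exp (μ * Metric.diam (Q : Set α)))
  have f_nonneg : ∀ Q ∈ F, 0 ≤ f Q := fun Q hQ => mul_nonneg (hw Q hQ) (by positivity)
  have sum_card_mul_f_le (x : α) : ∑ Q ∈ F with x ∈ Q, Q.card * f Q ≤ ζ :=
    (Finset.sum_congr rfl fun Q _ => by ring).trans_le (hdecay x)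
  refine (sum_inter_nonempty_sum_inter_nonempty_le
    (c := fun p => 2 * Real.exp (-μ * Metric.infDist p S)) f_nonneg sum_card_mul_f_le
    (fun Q hQ R hR => ?nonneg) (fun p _ => by positivity)
    (fun p _ Q hQ R hR hp hQR => ?le)).trans_eq ?eq
  case nonneg =>
    have wQ_nonneg := hw Q hQ
    have wR_nonneg := hw R hR
    positivity
  case le =>
    have := mul_le_mul_of_nonneg_left (card_union_mul_exp_neg_sInf_dist_union_le hμ hp hQR S)
      (mul_nonneg (hw Q hQ) (hw R hR))
    linarith
  case eq => rw [← Finset.mul_sum]; ring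

end Decay

/-- **Branching-sum estimate:** if `Σ_{Q∋x} w(Q)|Q|²e^{μ·diam Q} ≤ ζ` for all `x`, then
`Σ_{Q,R : P∼Q∼R} |Q∪R|·w(Q)w(R)·e^{−μ·dist(Q∪R,S)} ≤ 2ζ²·Σ_{p∈P} e^{−μ·dist(p,S)}`. -/
theorem branching_sum_estimate
    (w : Finset Λ → ℝ) (hw : ∀ Q, 0 ≤ w Q)
    (μ ζ : ℝ) (hμ : 0 < μ) (hζ : 0 < ζ)
    (hdecay : ∀ x : Λ, ∑ Q ∈ Finset.univ.filter (fun Q : Finset Λ => x ∈ Q),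
        w Q * (Q.card : ℝ) ^ 2 * Real.exp (μ * Metric.diam (Q : Set Λ)) ≤ ζ)
    (P S : Finset Λ) :
    ∑ Q ∈ Finset.univ.filter (fun Q : Finset Λ => (P ∩ Q).Nonempty),
      ∑ R ∈ Finset.univ.filter (fun R : Finset Λ => (Q ∩ R).Nonempty),
        ((Q ∪ R).card : ℝ) * w Q * w R *
          Real.exp (-μ * setDist ((Q ∪ R : Finset Λ) : Set Λ) (S : Set Λ)) ≤
      2 * ζ ^ 2 * ∑ p ∈ P, Real.exp (-μ * Metric.infDist p (S : Set Λ)) :=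
  branching_sum_estimate_general (fun Q _ => hw Q) hμ.le hdecay P S

end SetSums
end
end

section
/- Let L ⊂ ℝ³ be the (body-centered cubic) lattice generated over ℤ by the vectors (2,0,0), (0,2,0), and (1,1,1), and color each lattice point p = (x,y,z) ∈ L by c(p) = x + y + z mod 4. Then: (a) any two distinct points of L with the same color are at Euclidean distance at least 2√2; and (b) every point of ℝ³ is within Euclidean distance √5/2 of some point of L (so each Voronoi cell of L is contained in a closed ball of radius √5/2 about its center). -/
/-!
(a) The difference of two lattice points of the same color is a lattice vector whose coordinate sum
is divisible by `4`. Its coordinates have equal parity and an even sum, so all three are even: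
it is `2v` with `v ∈ ℤ³` of even coordinate sum. As `∑ vᵢ² ≡ ∑ vᵢ` modulo `2`, the integer `∑ vᵢ²`
is even, hence at least `2` when `v ≠ 0`.

(b) The lattice is `(2ℤ)³ ∪ (2ℤ + 1)³`. The distances from a real number to `2ℤ` and to `2ℤ + 1` add
up to `1`, so for one of the two cosets the coordinatewise distances `sᵢ ∈ [0, 1]` to it satisfy
`∑ sᵢ ≤ 3/2`. On that part of the cube the convex function `∑ sᵢ²` is at most its value `5/4` at
the vertex `(1, 1/2, 0)`.
-/

noncomputable section

namespace BCC

/-- A point of Euclidean `ℝ³` with the given coordinates. -/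
def vec (x y z : ℝ) : EuclideanSpace ℝ (Fin 3) :=
  (WithLp.equiv 2 (Fin 3 → ℝ)).symm ![x, y, z]

/-- The point of the BCC lattice with coefficients `a, b, c` over the basis
`(2,0,0), (0,2,0), (1,1,1)`. -/
def pt (a b c : ℤ) : EuclideanSpace ℝ (Fin 3) :=
  (a : ℝ) • vec 2 0 0 + (b : ℝ) • vec 0 2 0 + (c : ℝ) • vec 1 1 1

/-- The body-centered cubic lattice generated by `(2,0,0)`, `(0,2,0)`, `(1,1,1)`. -/
def lattice : Set (EuclideanSpace ℝ (Fin 3)) := {p | ∃ a b c : ℤ, p = pt a b c}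

/-- The coordinate sum `x + y + z` of `pt a b c = (2a+c, 2b+c, c)` is `2a + 2b + 3c`;
the color of the lattice point is its residue mod 4. -/
def color (a b c : ℤ) : ℤ := (2 * a + 2 * b + 3 * c) % 4

theorem exists_even_odd_abs_sub_add_abs_sub_eq_one {R : Type*} [CommRing R] [LinearOrder R]
    [IsStrictOrderedRing R] [FloorRing R] (t : R) :
    ∃ m n : ℤ, Even m ∧ Odd n ∧ |t - m| + |t - n| = 1 := by
  have hfloor : |t - ⌊t⌋| + |t - (⌊t⌋ + 1 : ℤ)| = 1 := by
    rw [abs_of_nonneg (sub_nonneg.mpr (Int.floor_le t)), abs_of_nonpos]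
    · push_cast
      ring
    · exact_mod_cast (sub_neg.mpr (Int.lt_floor_add_one t)).le
  rcases Int.even_or_odd ⌊t⌋ with h | h
  · exact ⟨⌊t⌋, ⌊t⌋ + 1, h, h.add_one, hfloor⟩
  · exact ⟨⌊t⌋ + 1, ⌊t⌋, h.add_one, h, (add_comm _ _).trans hfloor⟩

/-- The bound is the value of `∑ fᵢ²` at the vertex `(1, …, 1, r, 0, …, 0)`. The inductive step
subtracts the new value `f j` from `m + r`, borrowing a `1` from `m` when `r < f j`. -/
theorem sum_sq_le_natCast_add_sq {ι R : Type*} [CommRing R] [LinearOrder R] [IsStrictOrderedRing R]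
    {s : Finset ι} {f : ι → R} (hf : ∀ i ∈ s, f i ∈ Set.Icc 0 1) {m : ℕ} {r : R}
    (hr : r ∈ Set.Icc 0 1) (hsum : ∑ i ∈ s, f i ≤ m + r) :
    ∑ i ∈ s, f i ^ 2 ≤ m + r ^ 2 := by
  classical
  induction s using Finset.induction_on generalizing m r with
  | empty => simpa using add_nonneg m.cast_nonneg (sq_nonneg r)
  | insert j s hj ih =>
    rw [Finset.forall_mem_insert] at hf
    obtain ⟨⟨hj0, hj1⟩, hfs⟩ := hf
    obtain ⟨hr0, hr1⟩ := hr
    rw [Finset.sum_insert hj] at hsum ⊢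
    rcases le_total (f j) r with hjr | hrj
    · have hrest := ih hfs (m := m) (r := r - f j) ⟨by linarith, by linarith⟩ (by linarith)
      nlinarith [mul_nonneg hj0 (sub_nonneg.mpr hjr)]
    · cases m with
      | zero =>
        have hs0 : 0 ≤ ∑ i ∈ s, f i := Finset.sum_nonneg fun i hi => (hfs i hi).1
        have hjr : f j = r := by
          push_cast at hsum
          linarith
        have hrest := ih hfs (m := 0) (r := 0) ⟨le_rfl, zero_le_one⟩ (by linarith)
        rw [hjr]
        linarith
      | succ m =>
        push_cast at hsum ⊢
        have hrest := ih hfs (m := m) (r := 1 + r - f j) ⟨by linarith, by linarith⟩ (by linarith)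
        nlinarith [mul_nonneg (sub_nonneg.mpr hrj) (sub_nonneg.mpr hj1)]

/-- The integer vector `k` as a point of Euclidean space. Indexing by `k : ι → ℤ` keeps
the parity of the coordinates accessible. -/
def intVec {ι : Type*} (k : ι → ℤ) : EuclideanSpace ℝ ι :=
  WithLp.toLp 2 fun i => (k i : ℝ)

section IntVec

variable {ι : Type*} [Fintype ι]

theorem two_le_sum_sq_of_even_sum {v : ι → ℤ} (heven : Even (∑ i, v i)) (hv : v ≠ 0) :
    2 ≤ ∑ i, v i ^ 2 := by
  have hparity : Even (∑ i, v i ^ 2) := by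
    have hdiff : Even (∑ i, (v i ^ 2 - v i)) :=
      Finset.even_sum _ fun i _ => by simp [Int.even_sub, Int.even_pow]
    rw [Finset.sum_sub_distrib] at hdiff
    simpa using hdiff.add heven
  have hpos : 0 < ∑ i, v i ^ 2 := by
    obtain ⟨i, hi⟩ := Function.ne_iff.mp hv
    exact Finset.sum_pos' (fun j _ => sq_nonneg (v j))
      ⟨i, Finset.mem_univ i, sq_pos_of_ne_zero hi⟩
  obtain ⟨n, hn⟩ := hparity
  omega

theorem sqrt_two_le_norm_intVec {v : ι → ℤ} (heven : Even (∑ i, v i)) (hv : v ≠ 0) :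
    √2 ≤ ‖intVec v‖ := by
  rw [EuclideanSpace.norm_eq]
  apply Real.sqrt_le_sqrt
  simp only [intVec, Real.norm_eq_abs, sq_abs]
  exact_mod_cast two_le_sum_sq_of_even_sum heven hv

theorem sum_sq_le_of_sum_le_card_div_two {K : Type*} [Field K] [LinearOrder K]
    [IsStrictOrderedRing K] {f : ι → K} (hf : ∀ i, f i ∈ Set.Icc 0 1)
    (hsum : ∑ i, f i ≤ Fintype.card ι / 2) :
    ∑ i, f i ^ 2 ≤ (Fintype.card ι / 2 : ℕ) + (Fintype.card ι % 2 : ℕ) / 4 := by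
  have hcard : (Fintype.card ι : K) = 2 * (Fintype.card ι / 2 : ℕ) + (Fintype.card ι % 2 : ℕ) := by
    exact_mod_cast (Nat.div_add_mod (Fintype.card ι) 2).symm
  have hmod : ((Fintype.card ι % 2 : ℕ) : K) = 0 ∨ ((Fintype.card ι % 2 : ℕ) : K) = 1 := by
    exact_mod_cast Nat.mod_two_eq_zero_or_one (Fintype.card ι)
  have hsq : ((Fintype.card ι % 2 : ℕ) / 2 : K) ^ 2 = (Fintype.card ι % 2 : ℕ) / 4 := by
    rcases hmod with h | h <;> norm_num [h]
  rw [← hsq]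
  refine sum_sq_le_natCast_add_sq (fun i _ => hf i) ⟨by positivity, ?_⟩ (by linarith)
  rcases hmod with h | h <;> norm_num [h]

theorem exists_dist_intVec_le (x : EuclideanSpace ℝ ι) :
    ∃ k : ι → ℤ, ((∀ i, Even (k i)) ∨ ∀ i, Odd (k i)) ∧
      dist x (intVec k) ≤ √((Fintype.card ι / 2 : ℕ) + (Fintype.card ι % 2 : ℕ) / 4) := by
  choose m n hm hn hmn using fun i => exists_even_odd_abs_sub_add_abs_sub_eq_one (x i)
  have hdist {k : ι → ℤ} (hk : ∀ i, |x i - k i| ≤ 1)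
      (hsum : ∑ i, |x i - k i| ≤ Fintype.card ι / 2) :
      dist x (intVec k) ≤ √((Fintype.card ι / 2 : ℕ) + (Fintype.card ι % 2 : ℕ) / 4) := by
    rw [EuclideanSpace.dist_eq]
    exact Real.sqrt_le_sqrt
      (sum_sq_le_of_sum_le_card_div_two (fun i => ⟨abs_nonneg _, hk i⟩) hsum)
  have htotal : ∑ i, |x i - m i| + ∑ i, |x i - n i| = Fintype.card ι := by
    simp [← Finset.sum_add_distrib, hmn]
  rcases le_total (∑ i, |x i - m i|) (∑ i, |x i - n i|) with hle | hle
  · exact ⟨m, .inl hm, hdist (fun i => by linarith [hmn i, abs_nonneg (x i - n i)]) (by linarith)⟩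
  · exact ⟨n, .inr hn, hdist (fun i => by linarith [hmn i, abs_nonneg (x i - m i)]) (by linarith)⟩

end IntVec

theorem pt_eq_intVec (a b c : ℤ) : pt a b c = intVec ![2 * a + c, 2 * b + c, c] := by
  ext i
  fin_cases i <;> simp [pt, vec, intVec, mul_comm]

theorem pt_sub_pt (a b c a' b' c' : ℤ) :
    pt a b c - pt a' b' c' = pt (a - a') (b - b') (c - c') := by
  simp only [pt, Int.cast_sub]
  module

theorem color_sub_eq_zero {a b c a' b' c' : ℤ} (h : color a b c = color a' b' c') :
    color (a - a') (b - b') (c - c') = 0 := by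
  unfold color at h ⊢
  omega

theorem exists_pt_eq_two_smul_intVec {a b c : ℤ} (h : color a b c = 0) :
    ∃ v : Fin 3 → ℤ, Even (∑ i, v i) ∧ pt a b c = (2 : ℝ) • intVec v := by
  unfold color at h
  obtain ⟨w, rfl⟩ : Even c := Int.even_iff.mpr (by omega)
  refine ⟨![a + w, b + w, w], ?_, ?_⟩
  · simp only [Fin.sum_univ_three, Matrix.cons_val]
    exact Int.even_iff.mpr (by omega)
  · rw [pt_eq_intVec]
    ext i
    fin_cases i <;> simp [intVec] <;> ring

theorem two_mul_sqrt_two_le_norm_pt {a b c : ℤ} (hcolor : color a b c = 0) (hne : pt a b c ≠ 0) :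
    2 * √2 ≤ ‖pt a b c‖ := by
  obtain ⟨v, heven, hv⟩ := exists_pt_eq_two_smul_intVec hcolor
  have hv0 : v ≠ 0 := by
    rintro rfl
    exact hne (hv.trans (by ext; simp [intVec]))
  rw [hv, norm_smul, Real.norm_ofNat]
  gcongr
  exact sqrt_two_le_norm_intVec heven hv0

theorem intVec_mem_lattice {k : Fin 3 → ℤ} (hk : (∀ i, Even (k i)) ∨ ∀ i, Odd (k i)) :
    intVec k ∈ lattice := by
  obtain ⟨a, ha⟩ : Even (k 0 - k 2) := by grind
  obtain ⟨b, hb⟩ : Even (k 1 - k 2) := by grind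
  refine ⟨a, b, k 2, ?_⟩
  rw [pt_eq_intVec]
  congr 1
  ext i
  fin_cases i <;> simp <;> omega

/-- **BCC 4-coloring.** Coloring each BCC lattice point `p = (x,y,z)` by
`x + y + z mod 4`: (a) any two distinct lattice points of the same color are at Euclidean
distance at least `2√2`; (b) every point of `ℝ³` is within distance `√5/2` of a lattice
point. -/
theorem bcc_coloring :
    (∀ a b c a' b' c' : ℤ, color a b c = color a' b' c' →
      pt a b c ≠ pt a' b' c' → 2 * Real.sqrt 2 ≤ dist (pt a b c) (pt a' b' c')) ∧
    (∀ x : EuclideanSpace ℝ (Fin 3), ∃ p ∈ lattice, dist x p ≤ Real.sqrt 5 / 2) := by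
  refine ⟨fun a b c a' b' c' hcolor hne => ?_, fun x => ?_⟩
  · rw [← sub_ne_zero, pt_sub_pt] at hne
    rw [dist_eq_norm, pt_sub_pt]
    exact two_mul_sqrt_two_le_norm_pt (color_sub_eq_zero hcolor) hne
  · obtain ⟨k, hparity, hdist⟩ := exists_dist_intVec_le x
    have hradius : √((3 / 2 : ℕ) + (3 % 2 : ℕ) / 4) = √5 / 2 := by
      rw [Real.sqrt_eq_iff_mul_self_eq (by positivity) (by positivity)]
      norm_num [div_mul_div_comm]
    rw [Fintype.card_fin, hradius] at hdist
    exact ⟨intVec k, intVec_mem_lattice hparity, hdist⟩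

end BCC
end
end
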